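/- arXiv:1501.01498 — 2 statements merged into one kernel-verified Lean document; each statement's English description precedes it below -/
import Mathlib

section
/- Let (m_n)_{n≥1} and (m′_n)_{n≥1} be sequences of Borel probability measures on ℝ converging weakly to m and m′ respectively, and let F_n, G_n, F, G denote the CDFs of m_n, m′_n, m, m′. Then sup_{v∈(0,1)} |F⁻¹(v) − G⁻¹(v)| ≤ liminf_{n→∞} sup_{v∈(0,1)} |F_n⁻¹(v) − G_n⁻¹(v)|, where both sides are taken in [0,+∞]. -/
open MeasureTheory Filter Set

noncomputable section

/-- The CDF of a Borel measure on ℝ. -/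
def mcdf (m : Measure ℝ) (x : ℝ) : ℝ := (m (Iic x)).toReal

/-- The pseudo-inverse `F⁻¹(v) = inf {x | v ≤ F x}` of a CDF. -/
def cdfInv (F : ℝ → ℝ) (v : ℝ) : ℝ := sInf {x : ℝ | v ≤ F x}

/-!
On `(0, 1)` the pseudo-inverse is adjoint to the CDF: `F⁻¹ v ≤ x ↔ v ≤ F x`. By the portmanteau
theorem this makes `μ ↦ F_μ⁻¹ v` lower semicontinuous for each `v`, but it is upper semicontinuous
only up to a loss in the level: if `F_μ⁻¹ v < b` and `w < v`, then `F_ν⁻¹ w ≤ b` for all `ν` near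
`μ`. Since `F⁻¹` is left-continuous, a strict inequality `a < F⁻¹ v` survives at some level `w < v`,
so a gap `F⁻¹ v - G⁻¹ v > c` at `v` produces, for all nearby pairs of measures, a gap `> c` at `w`.
The loss in the level is harmless in the supremum over all levels.
-/

open Topology ProbabilityTheory
open scoped ENNReal

theorem cdfInv_le_iff {F : StieltjesFunction ℝ} {v x : ℝ} (hlow : ∃ a, F a < v)
    (hhigh : ∃ b, v ≤ F b) : cdfInv F v ≤ x ↔ v ≤ F x := by
  obtain ⟨a, ha⟩ := hlow
  have hbdd : BddBelow {x | v ≤ F x} :=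
    ⟨a, fun _ hx => (F.mono.reflect_lt (ha.trans_le hx)).le⟩
  refine ⟨fun hle => ?_, fun hvx => csInf_le hbdd hvx⟩
  have hright : ∀ y ∈ Ioi x, v ≤ F y := fun y hxy => by
    obtain ⟨z, hz, hzy⟩ := (csInf_lt_iff hbdd hhigh).1 (hle.trans_lt hxy)
    exact hz.trans (F.mono hzy.le)
  exact ge_of_tendsto ((F.right_continuous x).mono Ioi_subset_Ici_self)
    (eventually_mem_nhdsWithin.mono hright)

section ProbabilityMeasure

variable {μ : Measure ℝ} [IsProbabilityMeasure μ] {v x : ℝ}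

theorem mcdf_eq_cdf : mcdf μ = cdf μ :=
  funext fun x => (cdf_eq_real μ x).symm

theorem cdfInv_mcdf_le_iff (hv : v ∈ Ioo (0 : ℝ) 1) : cdfInv (mcdf μ) v ≤ x ↔ v ≤ mcdf μ x := by
  rw [mcdf_eq_cdf]
  exact cdfInv_le_iff ((tendsto_cdf_atBot μ).eventually_lt_const hv.1).exists
    ((tendsto_cdf_atTop μ).eventually_const_le hv.2).exists

theorem lt_cdfInv_mcdf_iff (hv : v ∈ Ioo (0 : ℝ) 1) : x < cdfInv (mcdf μ) v ↔ mcdf μ x < v :=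
  lt_iff_lt_of_le_iff_le (cdfInv_mcdf_le_iff hv)

theorem exists_lt_lt_cdfInv_mcdf (hv : v ∈ Ioo (0 : ℝ) 1) (hx : x < cdfInv (mcdf μ) v) :
    ∃ w ∈ Ioo (0 : ℝ) 1, w < v ∧ x < cdfInv (mcdf μ) w := by
  obtain ⟨w, hxw, hwv⟩ := exists_between ((lt_cdfInv_mcdf_iff hv).1 hx)
  have hw : w ∈ Ioo (0 : ℝ) 1 := ⟨ENNReal.toReal_nonneg.trans_lt hxw, hwv.trans hv.2⟩
  exact ⟨w, hw, hwv, (lt_cdfInv_mcdf_iff hw).2 hxw⟩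

end ProbabilityMeasure

section WeakTopology

theorem tendsto_probabilityMeasure_of_forall_bounded {Ω ι : Type*} [MeasurableSpace Ω]
    [TopologicalSpace Ω] [OpensMeasurableSpace Ω] {L : Filter ι} {μs : ι → ProbabilityMeasure Ω}
    {μ : ProbabilityMeasure Ω}
    (h : ∀ f : Ω → ℝ, Continuous f → (∃ M, ∀ x, |f x| ≤ M) →
      Tendsto (fun i => ∫ x, f x ∂(μs i : Measure Ω)) L (𝓝 (∫ x, f x ∂(μ : Measure Ω)))) :
    Tendsto μs L (𝓝 μ) :=
  ProbabilityMeasure.tendsto_iff_forall_integral_tendsto.2 fun f =>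
    h f f.continuous ⟨‖f‖, f.norm_coe_le_norm⟩

theorem upperSemicontinuous_mcdf (x : ℝ) :
    UpperSemicontinuous fun μ : ProbabilityMeasure ℝ => mcdf μ x := by
  intro μ w hw
  have hlimsup := ProbabilityMeasure.limsup_measure_closed_le_of_tendsto
    (tendsto_id (x := 𝓝 μ)) (isClosed_Iic (a := x))
  have hlt : (μ : Measure ℝ) (Iic x) < ENNReal.ofReal w :=
    (ENNReal.lt_ofReal_iff_toReal_lt (measure_ne_top _ _)).2 hw
  filter_upwards [eventually_lt_of_limsup_lt (hlimsup.trans_lt hlt)] with ν hν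
  exact (ENNReal.lt_ofReal_iff_toReal_lt (measure_ne_top _ _)).1 hν

theorem eventually_lt_mcdf {μ : ProbabilityMeasure ℝ} {w x y : ℝ} (hw : 0 ≤ w) (hxy : x < y)
    (hwx : w < mcdf μ x) : ∀ᶠ ν : ProbabilityMeasure ℝ in 𝓝 μ, w < mcdf ν y := by
  have hliminf := ProbabilityMeasure.le_liminf_measure_open_of_tendsto
    (tendsto_id (x := 𝓝 μ)) (isOpen_Iio (a := y))
  have hlt : ENNReal.ofReal w < (μ : Measure ℝ) (Iio y) :=
    ((ENNReal.ofReal_lt_iff_lt_toReal hw (measure_ne_top _ _)).2 hwx).trans_le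
      (measure_mono (Iic_subset_Iio.2 hxy))
  filter_upwards [eventually_lt_of_lt_liminf (hlt.trans_le hliminf)] with ν hν
  exact (ENNReal.ofReal_lt_iff_lt_toReal hw (measure_ne_top _ _)).1
    (hν.trans_le (measure_mono Iio_subset_Iic_self))

theorem lowerSemicontinuous_cdfInv_mcdf {v : ℝ} (hv : v ∈ Ioo (0 : ℝ) 1) :
    LowerSemicontinuous fun μ : ProbabilityMeasure ℝ => cdfInv (mcdf μ) v := by
  intro μ a ha
  filter_upwards [upperSemicontinuous_mcdf a μ v ((lt_cdfInv_mcdf_iff hv).1 ha)] with ν hν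
  exact (lt_cdfInv_mcdf_iff hv).2 hν

theorem eventually_cdfInv_mcdf_le {μ : ProbabilityMeasure ℝ} {v w b : ℝ}
    (hv : v ∈ Ioo (0 : ℝ) 1) (hw : 0 < w) (hwv : w < v) (hb : cdfInv (mcdf μ) v < b) :
    ∀ᶠ ν : ProbabilityMeasure ℝ in 𝓝 μ, cdfInv (mcdf ν) w ≤ b := by
  have hlt : w < mcdf μ (cdfInv (mcdf μ) v) := hwv.trans_le ((cdfInv_mcdf_le_iff hv).1 le_rfl)
  filter_upwards [eventually_lt_mcdf hw.le hb hlt] with ν hν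
  exact (cdfInv_mcdf_le_iff ⟨hw, hwv.trans hv.2⟩).2 hν.le

theorem eventually_exists_lt_cdfInv_mcdf_sub {μ ν : ProbabilityMeasure ℝ} {v c : ℝ}
    (hv : v ∈ Ioo (0 : ℝ) 1) (hc : c < cdfInv (mcdf μ) v - cdfInv (mcdf ν) v) :
    ∀ᶠ p : ProbabilityMeasure ℝ × ProbabilityMeasure ℝ in 𝓝 (μ, ν),
      ∃ w ∈ Ioo (0 : ℝ) 1, c < cdfInv (mcdf p.1) w - cdfInv (mcdf p.2) w := by
  obtain ⟨b, hνb, hbμ⟩ := exists_between (lt_sub_comm.1 hc)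
  obtain ⟨w, hw, hwv, hbw⟩ := exists_lt_lt_cdfInv_mcdf hv (lt_sub_iff_add_lt'.1 hbμ)
  filter_upwards [(lowerSemicontinuous_cdfInv_mcdf hw μ _ hbw).prod_inl_nhds ν,
    (eventually_cdfInv_mcdf_le hv hw.1 hwv hνb).prod_inr_nhds μ] with p hp₁ hp₂
  exact ⟨w, hw, by linarith⟩

end WeakTopology

/-- The `∞`-Wasserstein distance between two probability measures on `ℝ`, encoded as the uniform
distance between their quantile functions on `(0, 1)` rather than through couplings. -/
def wassersteinInfty (μ ν : Measure ℝ) : ℝ≥0∞ :=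
  ⨆ v : Ioo (0 : ℝ) 1, ENNReal.ofReal |cdfInv (mcdf μ) v - cdfInv (mcdf ν) v|

theorem lowerSemicontinuous_iSup_ofReal_cdfInv_mcdf_sub :
    LowerSemicontinuous fun p : ProbabilityMeasure ℝ × ProbabilityMeasure ℝ =>
      ⨆ v : Ioo (0 : ℝ) 1, ENNReal.ofReal (cdfInv (mcdf p.1) v - cdfInv (mcdf p.2) v) := by
  rintro ⟨μ, ν⟩ c hc
  obtain ⟨⟨v, hv⟩, hcv⟩ := lt_iSup_iff.1 hc
  have hc_top : c ≠ ∞ := hcv.ne_top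
  filter_upwards [eventually_exists_lt_cdfInv_mcdf_sub hv
    ((ENNReal.lt_ofReal_iff_toReal_lt hc_top).1 hcv)] with p ⟨w, hw, hcw⟩
  exact lt_iSup_iff.2 ⟨⟨w, hw⟩, (ENNReal.lt_ofReal_iff_toReal_lt hc_top).2 hcw⟩

theorem wasserstein_infty_lsc_general :
    LowerSemicontinuous fun p : ProbabilityMeasure ℝ × ProbabilityMeasure ℝ =>
      wassersteinInfty p.1 p.2 := by
  have hexcess := lowerSemicontinuous_iSup_ofReal_cdfInv_mcdf_sub
  simp only [wassersteinInfty, abs_eq_max_neg, neg_sub, ENNReal.ofReal_max, iSup_sup_eq]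
  have hswap := hexcess.comp continuous_swap
  exact hexcess.sup hswap

/-- **Lower semicontinuity of the ∞-Wasserstein distance** along weakly convergent
sequences of probability measures on ℝ:
`sup_{v∈(0,1)} |F⁻¹(v) − G⁻¹(v)| ≤ liminf sup_{v∈(0,1)} |Fₙ⁻¹(v) − Gₙ⁻¹(v)|` in `[0,∞]`. -/
theorem wasserstein_infty_lsc
    (mn m'n : ℕ → Measure ℝ) (m m' : Measure ℝ)
    (hmn : ∀ n, IsProbabilityMeasure (mn n))
    (hm'n : ∀ n, IsProbabilityMeasure (m'n n))
    (hm : IsProbabilityMeasure m) (hm' : IsProbabilityMeasure m')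
    (hweak : ∀ f : ℝ → ℝ, Continuous f → (∃ M, ∀ x, |f x| ≤ M) →
      Tendsto (fun n => ∫ x, f x ∂(mn n)) atTop (nhds (∫ x, f x ∂m)))
    (hweak' : ∀ f : ℝ → ℝ, Continuous f → (∃ M, ∀ x, |f x| ≤ M) →
      Tendsto (fun n => ∫ x, f x ∂(m'n n)) atTop (nhds (∫ x, f x ∂m'))) :
    (⨆ v : Ioo (0:ℝ) 1,
        ENNReal.ofReal |cdfInv (mcdf m) v - cdfInv (mcdf m') v|)
      ≤ Filter.liminf (fun n =>
          ⨆ v : Ioo (0:ℝ) 1,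
            ENNReal.ofReal |cdfInv (mcdf (mn n)) v - cdfInv (mcdf (m'n n)) v|)
          atTop := by
  let toProb (μ : Measure ℝ) (hμ : IsProbabilityMeasure μ) : ProbabilityMeasure ℝ := ⟨μ, hμ⟩
  have hlim : Tendsto (fun n => toProb (mn n) (hmn n)) atTop (𝓝 (toProb m hm)) :=
    tendsto_probabilityMeasure_of_forall_bounded hweak
  have hlim' : Tendsto (fun n => toProb (m'n n) (hm'n n)) atTop (𝓝 (toProb m' hm')) :=
    tendsto_probabilityMeasure_of_forall_bounded hweak'
  exact (wasserstein_infty_lsc_general.le_liminf (toProb m hm, toProb m' hm')).trans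
    (liminf_le_liminf_of_le (hlim.prodMk_nhds hlim'))
end
end

section
/- Let p ∈ [1,∞). Let m and m′ be Borel probability measures on ℝ with CDFs F and G, and for n ≥ 1 let (x₁(n),…,x_n(n)) and (y₁(n),…,y_n(n)) be their discretisations of order n, i.e. x_k(n) := (n+1) ∫_{(2k−1)/(2(n+1))}^{(2k+1)/(2(n+1))} F⁻¹(w) dw and y_k(n) := (n+1) ∫_{(2k−1)/(2(n+1))}^{(2k+1)/(2(n+1))} G⁻¹(w) dw. Then for every n ≥ 1, (1/n) Σ_{k=1}^n |x_k(n) − y_k(n)|^p ≤ ((n+1)/n) · ∫₀¹ |F⁻¹(v) − G⁻¹(v)|^p dv, where the right-hand side is taken in [0,+∞]. -/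
/-!
The `k`-th discretisation point of `f` is the average of `f` over an interval of length
`1 / (n + 1)` centred at `k / (n + 1)`. For `1 ≤ k ≤ n` these intervals are disjoint and contained
in `(0, 1)`. Quantile functions are monotone, hence locally integrable on `(0, 1)`, so the
difference of the points of `f` and `g` is the average of `f - g`. By Jensen's inequality the `p`-th
power of its norm is at most the average of `‖f - g‖ ^ p`; summing over the disjoint intervals gives
the bound.
-/

open MeasureTheory Filter Set

noncomputable section

section Quantile

variable {F : ℝ → ℝ} {a b : ℝ}

lemma monotoneOn_cdfInv (hbot : Tendsto F atBot (nhds a)) (htop : Tendsto F atTop (nhds b)) :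
    MonotoneOn (cdfInv F) (Ioo a b) := by
  intro u hu v hv huv
  have bddBelow_superlevel : BddBelow {x | u ≤ F x} := by
    obtain ⟨z, hz⟩ := eventually_atBot.1 (hbot.eventually_lt_const hu.1)
    exact ⟨z, fun w hw ↦ le_of_not_ge fun hwz ↦ (hz w hwz).not_ge hw⟩
  have nonempty_superlevel : {x | v ≤ F x}.Nonempty :=
    (htop.eventually_const_le hv.2).exists
  exact csInf_le_csInf bddBelow_superlevel nonempty_superlevel fun _ hw ↦ huv.trans hw

lemma locallyIntegrableOn_cdfInv (hbot : Tendsto F atBot (nhds a))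
    (htop : Tendsto F atTop (nhds b)) : LocallyIntegrableOn (cdfInv F) (Ioo a b) :=
  (locallyIntegrableOn_iff isOpen_Ioo.isLocallyClosed).2 fun _ hK hK_compact ↦
    ((monotoneOn_cdfInv hbot htop).mono hK).integrableOn_isCompact hK_compact

lemma locallyIntegrableOn_cdfInv_of_measure_Iic {m : Measure ℝ} [IsProbabilityMeasure m]
    (hF : ∀ x, F x = (m (Iic x)).toReal) : LocallyIntegrableOn (cdfInv F) (Ioo 0 1) := by
  obtain rfl : F = ProbabilityTheory.cdf m :=
    funext fun x ↦ (hF x).trans (ProbabilityTheory.cdf_eq_real m x).symm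
  exact locallyIntegrableOn_cdfInv (ProbabilityTheory.tendsto_cdf_atBot m)
    (ProbabilityTheory.tendsto_cdf_atTop m)

end Quantile

section Jensen

variable {α E : Type*} [MeasurableSpace α] [NormedAddCommGroup E] [NormedSpace ℝ E]
  {μ : Measure α} {p : ℝ}

lemma enorm_integral_rpow_le_lintegral_enorm_rpow (hμ : μ univ ≤ 1) (hp : 1 ≤ p) (f : α → E) :
    ‖∫ x, f x ∂μ‖ₑ ^ p ≤ ∫⁻ x, ‖f x‖ₑ ^ p ∂μ := by
  have hp_pos : 0 < p := one_pos.trans_le hp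
  by_cases hf : AEStronglyMeasurable f μ
  · have exponent_nonneg : 0 ≤ 1 / 1 - 1 / p := by
      simpa using inv_le_one_of_one_le₀ hp
    have enorm_integral_le : ‖∫ x, f x ∂μ‖ₑ ≤ eLpNorm' f p μ := calc
      ‖∫ x, f x ∂μ‖ₑ ≤ eLpNorm' f 1 μ := by
        simpa [eLpNorm'] using enorm_integral_le_lintegral_enorm f
      _ ≤ eLpNorm' f p μ * μ univ ^ (1 / 1 - 1 / p) :=
        eLpNorm'_le_eLpNorm'_mul_rpow_measure_univ one_pos hp hf
      _ ≤ eLpNorm' f p μ := mul_le_of_le_one_right' (ENNReal.rpow_le_one hμ exponent_nonneg)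
    rw [lintegral_rpow_enorm_eq_rpow_eLpNorm' hp_pos]
    gcongr
  · simp [integral_non_aestronglyMeasurable hf, hp_pos]

lemma enorm_average_rpow_le_laverage_enorm_rpow (hp : 1 ≤ p) (f : α → E) :
    ‖⨍ x, f x ∂μ‖ₑ ^ p ≤ ⨍⁻ x, ‖f x‖ₑ ^ p ∂μ :=
  enorm_integral_rpow_le_lintegral_enorm_rpow (ENNReal.inv_mul_le_one _) hp f

lemma measure_mul_enorm_setAverage_rpow_le (s : Set α) (hp : 1 ≤ p) (f : α → E) :
    μ s * ‖⨍ x in s, f x ∂μ‖ₑ ^ p ≤ ∫⁻ x in s, ‖f x‖ₑ ^ p ∂μ := calc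
  μ s * ‖⨍ x in s, f x ∂μ‖ₑ ^ p ≤ μ s * ⨍⁻ x in s, ‖f x‖ₑ ^ p ∂μ := by
    gcongr
    exact enorm_average_rpow_le_laverage_enorm_rpow hp f
  _ = μ s * (μ s)⁻¹ * ∫⁻ x in s, ‖f x‖ₑ ^ p ∂μ := by
    rw [setLAverage_eq, ENNReal.div_eq_inv_mul, mul_assoc]
  _ ≤ ∫⁻ x in s, ‖f x‖ₑ ^ p ∂μ := mul_le_of_le_one_left' (ENNReal.mul_inv_le_one _)

lemma sum_measure_mul_enorm_setAverage_rpow_le {ι : Type*} {t : Finset ι} {s : ι → Set α}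
    (hs : (t : Set ι).PairwiseDisjoint s) (hs_meas : ∀ i ∈ t, MeasurableSet (s i))
    (hp : 1 ≤ p) (f : α → E) :
    ∑ i ∈ t, μ (s i) * ‖⨍ x in s i, f x ∂μ‖ₑ ^ p ≤ ∫⁻ x in ⋃ i ∈ t, s i, ‖f x‖ₑ ^ p ∂μ := by
  rw [lintegral_biUnion_finset hs hs_meas]
  gcongr with i
  exact measure_mul_enorm_setAverage_rpow_le (s i) hp f

end Jensen

section Discretisation

/-- The left endpoint of the `k`-th averaging interval of the discretisation of order `n`; the
right endpoint is `discretisationNode n (k + 1)`. -/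
def discretisationNode (n k : ℕ) : ℝ := (2 * k - 1) / (2 * (n + 1))

lemma discretisationNode_add_one (n k : ℕ) :
    discretisationNode n (k + 1) = (2 * k + 1) / (2 * (n + 1)) := by
  rw [discretisationNode]
  push_cast
  ring

lemma discretisationNode_add_one_sub (n k : ℕ) :
    discretisationNode n (k + 1) - discretisationNode n k = (n + 1 : ℝ)⁻¹ := by
  rw [discretisationNode_add_one, discretisationNode]
  field

lemma monotone_discretisationNode (n : ℕ) : Monotone (discretisationNode n) := by
  intro j k hjk
  unfold discretisationNode
  gcongr

variable {n k : ℕ}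

lemma discretisationNode_mem_Ioo (hk : 1 ≤ k) (hkn : k ≤ n + 1) :
    discretisationNode n k ∈ Ioo 0 1 := by
  have hk' : (1 : ℝ) ≤ k := mod_cast hk
  have hkn' : (k : ℝ) ≤ n + 1 := mod_cast hkn
  exact ⟨div_pos (by linarith) (by positivity), (div_lt_one (by positivity)).2 (by linarith)⟩

lemma Icc_discretisationNode_subset_Ioo (hk : k ∈ Finset.Icc 1 n) :
    Icc (discretisationNode n k) (discretisationNode n (k + 1)) ⊆ Ioo 0 1 := by
  obtain ⟨hk, hkn⟩ := Finset.mem_Icc.1 hk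
  exact ordConnected_Ioo.out (discretisationNode_mem_Ioo hk (by lia))
    (discretisationNode_mem_Ioo (by lia) (by lia))

variable {E : Type*} [NormedAddCommGroup E] [NormedSpace ℝ E] {f g : ℝ → E} {p : ℝ}

/-- The `k`-th point `x_k(n)` of the discretisation of order `n` of the function `f`, which plays
the role of the pseudo-inverse `F⁻¹`. -/
def discretisation (f : ℝ → E) (n k : ℕ) : E :=
  ((n : ℝ) + 1) •
    ∫ w in ((2 * (k : ℝ) - 1) / (2 * ((n : ℝ) + 1)))..
      ((2 * (k : ℝ) + 1) / (2 * ((n : ℝ) + 1))), f w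

lemma discretisation_eq_smul_integral (f : ℝ → E) (n k : ℕ) :
    discretisation f n k =
      (n + 1 : ℝ) • ∫ w in discretisationNode n k..discretisationNode n (k + 1), f w := by
  rw [discretisation, discretisationNode_add_one, discretisationNode]

lemma discretisation_eq_setAverage (f : ℝ → E) (n k : ℕ) :
    discretisation f n k =
      ⨍ w in Ioc (discretisationNode n k) (discretisationNode n (k + 1)), f w := by
  have hle : discretisationNode n k ≤ discretisationNode n (k + 1) :=
    monotone_discretisationNode n k.le_succ
  rw [← uIoc_of_le hle, interval_average_eq, discretisationNode_add_one_sub, inv_inv,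
    discretisation_eq_smul_integral]

lemma discretisation_sub (hf : LocallyIntegrableOn f (Ioo 0 1))
    (hg : LocallyIntegrableOn g (Ioo 0 1)) (hk : k ∈ Finset.Icc 1 n) :
    discretisation (f - g) n k = discretisation f n k - discretisation g n k := by
  have intervalIntegrable {h : ℝ → E} (hh : LocallyIntegrableOn h (Ioo 0 1)) :
      IntervalIntegrable h volume (discretisationNode n k) (discretisationNode n (k + 1)) :=
    (intervalIntegrable_iff_integrableOn_Icc_of_le (monotone_discretisationNode n k.le_succ)).2
      (hh.integrableOn_compact_subset (Icc_discretisationNode_subset_Ioo hk) isCompact_Icc)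
  simp only [discretisation_eq_smul_integral, Pi.sub_apply, ← smul_sub,
    intervalIntegral.integral_sub (intervalIntegrable hf) (intervalIntegrable hg)]

lemma sum_enorm_discretisation_rpow_le (hp : 1 ≤ p) (f : ℝ → E) (n : ℕ) :
    ∑ k ∈ Finset.Icc 1 n, ‖discretisation f n k‖ₑ ^ p ≤
      ENNReal.ofReal (n + 1) * ∫⁻ v in Ioo 0 1, ‖f v‖ₑ ^ p := by
  let cell (k : ℕ) : Set ℝ := Ioc (discretisationNode n k) (discretisationNode n (k + 1))
  have volume_cell (k : ℕ) : volume (cell k) = (ENNReal.ofReal (n + 1))⁻¹ := by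
    rw [Real.volume_Ioc, discretisationNode_add_one_sub, ENNReal.ofReal_inv_of_pos (by positivity)]
  have disjoint_cell : (Finset.Icc 1 n : Set ℕ).PairwiseDisjoint cell :=
    (monotone_discretisationNode n).pairwise_disjoint_on_Ioc_succ.set_pairwise _
  have iUnion_cell_subset : ⋃ k ∈ Finset.Icc 1 n, cell k ⊆ Ioo 0 1 :=
    iUnion₂_subset fun _ hk ↦ Ioc_subset_Icc_self.trans (Icc_discretisationNode_subset_Ioo hk)
  rw [mul_comm, ← ENNReal.div_le_iff (by positivity) ENNReal.ofReal_ne_top]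
  calc (∑ k ∈ Finset.Icc 1 n, ‖discretisation f n k‖ₑ ^ p) / ENNReal.ofReal (n + 1)
    _ = ∑ k ∈ Finset.Icc 1 n, volume (cell k) * ‖⨍ w in cell k, f w‖ₑ ^ p := by
      simp only [ENNReal.div_eq_inv_mul, Finset.mul_sum, volume_cell,
        discretisation_eq_setAverage, cell]
    _ ≤ ∫⁻ v in ⋃ k ∈ Finset.Icc 1 n, cell k, ‖f v‖ₑ ^ p :=
      sum_measure_mul_enorm_setAverage_rpow_le disjoint_cell (fun _ _ ↦ measurableSet_Ioc) hp f
    _ ≤ ∫⁻ v in Ioo 0 1, ‖f v‖ₑ ^ p := lintegral_mono_set iUnion_cell_subset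

theorem discretisation_wasserstein_bound_general (hp : 1 ≤ p)
    (hf : LocallyIntegrableOn f (Ioo 0 1)) (hg : LocallyIntegrableOn g (Ioo 0 1)) (hn : 1 ≤ n) :
    ENNReal.ofReal ((1 / (n : ℝ)) *
        ∑ k ∈ Finset.Icc 1 n, ‖discretisation f n k - discretisation g n k‖ ^ p)
      ≤ ENNReal.ofReal (((n : ℝ) + 1) / n) *
        ∫⁻ v in Ioo (0 : ℝ) 1, ENNReal.ofReal (‖f v - g v‖ ^ p) := by
  have hn_pos : (0 : ℝ) < n := mod_cast hn
  have ofReal_norm_rpow (v : E) : ENNReal.ofReal (‖v‖ ^ p) = ‖v‖ₑ ^ p := by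
    rw [← ENNReal.ofReal_rpow_of_nonneg (norm_nonneg v) (by positivity), ofReal_norm]
  calc ENNReal.ofReal ((1 / (n : ℝ)) *
        ∑ k ∈ Finset.Icc 1 n, ‖discretisation f n k - discretisation g n k‖ ^ p)
    _ = (∑ k ∈ Finset.Icc 1 n, ‖discretisation (f - g) n k‖ₑ ^ p) / ENNReal.ofReal n := by
      rw [one_div_mul_eq_div, ENNReal.ofReal_div_of_pos hn_pos,
        ENNReal.ofReal_sum_of_nonneg fun _ _ ↦ by positivity]
      congr 1
      refine Finset.sum_congr rfl fun k hk ↦ ?_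
      rw [ofReal_norm_rpow, discretisation_sub hf hg hk]
    _ ≤ ENNReal.ofReal (n + 1) * (∫⁻ v in Ioo 0 1, ‖(f - g) v‖ₑ ^ p) / ENNReal.ofReal n := by
      gcongr
      exact sum_enorm_discretisation_rpow_le hp (f - g) n
    _ = ENNReal.ofReal (((n : ℝ) + 1) / n) *
        ∫⁻ v in Ioo (0 : ℝ) 1, ENNReal.ofReal (‖f v - g v‖ ^ p) := by
      simp only [ofReal_norm_rpow, Pi.sub_apply, ENNReal.ofReal_div_of_pos hn_pos,
        ENNReal.mul_div_right_comm]

end Discretisation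

/-- **Wasserstein bound for the discretisation**: if `x(n)` and `y(n)` are the order-`n`
discretisations of `m` and `m′`, then for every `n ≥ 1`,
`(1/n) Σ_{k=1}^n |x_k(n) − y_k(n)|^p ≤ ((n+1)/n) ∫₀¹ |F⁻¹(v) − G⁻¹(v)|^p dv` in `[0,∞]`. -/
theorem discretisation_wasserstein_bound (p : ℝ) (hp : 1 ≤ p)
    (m m' : Measure ℝ) [IsProbabilityMeasure m] [IsProbabilityMeasure m']
    (F G : ℝ → ℝ)
    (hF : ∀ x : ℝ, F x = (m (Iic x)).toReal)
    (hG : ∀ x : ℝ, G x = (m' (Iic x)).toReal)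
    (x y : ℕ → ℕ → ℝ)
    (hx : ∀ n k : ℕ, 1 ≤ k → k ≤ n →
      x n k = ((n : ℝ) + 1) *
        ∫ w in ((2 * (k : ℝ) - 1) / (2 * ((n : ℝ) + 1)))..
            ((2 * (k : ℝ) + 1) / (2 * ((n : ℝ) + 1))), cdfInv F w)
    (hy : ∀ n k : ℕ, 1 ≤ k → k ≤ n →
      y n k = ((n : ℝ) + 1) *
        ∫ w in ((2 * (k : ℝ) - 1) / (2 * ((n : ℝ) + 1)))..
            ((2 * (k : ℝ) + 1) / (2 * ((n : ℝ) + 1))), cdfInv G w)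
    (n : ℕ) (hn : 1 ≤ n) :
    ENNReal.ofReal ((1 / (n : ℝ)) * ∑ k ∈ Finset.Icc 1 n, |x n k - y n k| ^ p)
      ≤ ENNReal.ofReal (((n : ℝ) + 1) / (n : ℝ)) *
        ∫⁻ v in Ioo (0:ℝ) 1, ENNReal.ofReal (|cdfInv F v - cdfInv G v| ^ p) := by
  have hxy : ∀ k ∈ Finset.Icc 1 n, |x n k - y n k| ^ p =
      ‖discretisation (cdfInv F) n k - discretisation (cdfInv G) n k‖ ^ p := by
    intro k hk
    obtain ⟨hk, hkn⟩ := Finset.mem_Icc.1 hk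
    rw [hx n k hk hkn, hy n k hk hkn, Real.norm_eq_abs]
    rfl
  rw [Finset.sum_congr rfl hxy]
  exact discretisation_wasserstein_bound_general hp (locallyIntegrableOn_cdfInv_of_measure_Iic hF)
    (locallyIntegrableOn_cdfInv_of_measure_Iic hG) hn
end
end
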